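/- (Score dynamics along an arbitrary curve.) Let D be a positive natural number, α, σ : ℝ → ℝ smooth with α(t) > 0 and σ(t) > 0 for all t, λ(t) = log(α(t)²/σ(t)²), f(t) = (d/dt) log α(t), g(t)² = -λ'(t)·σ(t)². Let p : ℝ → ℝ^D → ℝ be smooth and everywhere positive, satisfying the linear-drift Fokker–Planck equation ∂_t p(t,x) = -div_x(f(t)·x·p(t,x)) + (1/2)·g(t)²·Δ_x p(t,x) for all t and x. Then for every differentiable curve y : ℝ → ℝ^D and every s: (d/ds)[∇_x log p(s, y(s))] = (1/2)·g(s)²·∇_x(Δ_x log p)(s, y(s)) - f(s)·∇_x log p(s, y(s)) + Hess_x log p(s, y(s)) applied to (y'(s) - f(s)·y(s) + g(s)²·∇_x log p(s, y(s))). -/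

import Mathlib

open scoped BigOperators RealInnerProductSpace
open MeasureTheory

/-- Divergence of a vector field on `EuclideanSpace ℝ (Fin D)`. -/
noncomputable def divg {D : ℕ} (F : EuclideanSpace ℝ (Fin D) → EuclideanSpace ℝ (Fin D))
    (x : EuclideanSpace ℝ (Fin D)) : ℝ :=
  ∑ i, fderiv ℝ F x (EuclideanSpace.single i 1) i

/-- Laplacian of a scalar field on `EuclideanSpace ℝ (Fin D)`. -/
noncomputable def lap {D : ℕ} (f : EuclideanSpace ℝ (Fin D) → ℝ)
    (x : EuclideanSpace ℝ (Fin D)) : ℝ :=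
  divg (gradient f) x

/-!
A Fokker–Planck equation with drift `b` and squared diffusion coefficient `g²` is the continuity
equation `∂ₜp = -div (p v)` for the probability-flow velocity `v = b - (g²/2) ∇ log p`, because
`∇p = p ∇ log p`. Dividing by `p` gives `∂ₜ log p = -div v - ⟪∇ log p, v⟫`. Taking the gradient,
commuting it with `∂ₜ`, and adding the transport term `Hess (log p) y'` of the chain rule gives the
derivative of the score along a curve `y`. The field `v` enters both undifferentiated and through
its derivative, and each occurrence contributes `(g²/2) Hess (log p) (∇ log p)`.
-/

section TimeDependent

open scoped Topology

variable {E G : Type*} [NormedAddCommGroup E] [NormedSpace ℝ E]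
  [NormedAddCommGroup G] [NormedSpace ℝ G]

theorem differentiableAt_fderiv {f : E → G} {x : E} (hf : ContDiffAt ℝ 2 f x) :
    DifferentiableAt ℝ (fderiv ℝ f) x :=
  (hf.fderiv_right (m := 1) le_rfl).differentiableAt one_ne_zero

theorem hasDerivAt_along_curve {Φ : ℝ → E → G} {y : ℝ → E} {a : G} {y' : E} {s : ℝ}
    (hΦ : DifferentiableAt ℝ (Function.uncurry Φ) (s, y s))
    (hΦs : HasDerivAt (fun t => Φ t (y s)) a s) (hy : HasDerivAt y y' s) :
    HasDerivAt (fun t => Φ t (y t)) (a + fderiv ℝ (Φ s) (y s) y') s := by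
  set Φ' := fderiv ℝ (Function.uncurry Φ) (s, y s)
  have h_time : a = Φ' (1, 0) :=
    hΦs.unique (HasFDerivAt.comp_hasDerivAt (f := fun t => (t, y s)) s hΦ.hasFDerivAt
      ((hasDerivAt_id s).prodMk (hasDerivAt_const s (y s))))
  have h_space : fderiv ℝ (Φ s) (y s) = Φ' ∘L ContinuousLinearMap.inr ℝ ℝ E :=
    (hΦ.hasFDerivAt.comp (y s) (hasFDerivAt_prodMk_right s (y s))).fderiv
  have h_split : a + fderiv ℝ (Φ s) (y s) y' = Φ' (1, y') := by
    simp [h_time, h_space, ← map_add]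
  rw [h_split]
  exact HasFDerivAt.comp_hasDerivAt (f := fun t => (t, y t)) s hΦ.hasFDerivAt
    ((hasDerivAt_id s).prodMk hy)

theorem deriv_eq_fderiv_uncurry_apply {L : ℝ → E → G} {t : ℝ} {x : E}
    (hL : DifferentiableAt ℝ (Function.uncurry L) (t, x)) :
    deriv (fun u => L u x) t = fderiv ℝ (Function.uncurry L) (t, x) (1, 0) :=
  (HasFDerivAt.comp_hasDerivAt (f := fun u => (u, x)) t hL.hasFDerivAt
    ((hasDerivAt_id t).prodMk (hasDerivAt_const t x))).deriv

theorem fderiv_deriv_apply {L : ℝ → E → G} {t : ℝ} {x : E}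
    (hL : ContDiffAt ℝ 2 (Function.uncurry L) (t, x)) (v : E) :
    fderiv ℝ (fun z => deriv (fun u => L u z) t) x v
      = fderiv ℝ (fderiv ℝ (Function.uncurry L)) (t, x) (0, v) (1, 0) := by
  have h_slice : HasFDerivAt (fun z => (t, z)) (ContinuousLinearMap.inr ℝ ℝ E) x :=
    hasFDerivAt_prodMk_right t x
  have h_formula : (fun z => deriv (fun u => L u z) t)
      =ᶠ[𝓝 x] fun z => fderiv ℝ (Function.uncurry L) (t, z) (1, 0) := by
    filter_upwards [h_slice.continuousAt.eventually (hL.eventually (by simp))] with z hz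
    exact deriv_eq_fderiv_uncurry_apply (hz.differentiableAt two_ne_zero)
  have h_mixed := (HasFDerivAt.comp x (differentiableAt_fderiv hL).hasFDerivAt h_slice).clm_apply
    (hasFDerivAt_const ((1, 0) : ℝ × E) x)
  simpa using congr($((h_mixed.congr_of_eventuallyEq h_formula).fderiv) v)

end TimeDependent

section Gradient

open ContinuousLinearMap InnerProductSpace
open scoped Gradient Topology

variable {F G : Type*} [NormedAddCommGroup F] [InnerProductSpace ℝ F] [CompleteSpace F]
  [NormedAddCommGroup G] [InnerProductSpace ℝ G] [CompleteSpace G]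

theorem gradient_neg {l : F → ℝ} {x : F} : ∇ (fun z => -l z) x = -∇ l x := by
  simp [gradient, fderiv_fun_neg]

theorem gradient_sub {l m : F → ℝ} {x : F} (hl : DifferentiableAt ℝ l x)
    (hm : DifferentiableAt ℝ m x) : ∇ (fun z => l z - m z) x = ∇ l x - ∇ m x := by
  simp [gradient, fderiv_fun_sub hl hm]

theorem gradient_const_mul {l : F → ℝ} {x : F} (hl : DifferentiableAt ℝ l x) (c : ℝ) :
    ∇ (fun z => c * l z) x = c • ∇ l x := by
  simp [gradient, fderiv_const_mul hl]

theorem hasGradientAt_inner {A B : F → G} {A' B' : F →L[ℝ] G} {x : F} (hA : HasFDerivAt A A' x)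
    (hB : HasFDerivAt B B' x) :
    HasGradientAt (fun z => ⟪A z, B z⟫) (adjoint A' (B x) + adjoint B' (A x)) x := by
  rw [hasGradientAt_iff_hasFDerivAt]
  refine (hA.inner ℝ hB).congr_fderiv (ContinuousLinearMap.ext fun v => ?_)
  simp [fderivInnerCLM_apply, adjoint_inner_left, real_inner_comm, add_comm]

theorem contDiffAt_gradient {l : F → ℝ} {x : F} {m n : WithTop ℕ∞} (hl : ContDiffAt ℝ n l x)
    (hmn : m + 1 ≤ n) : ContDiffAt ℝ m (∇ l) x :=
  (toDual ℝ F).symm.contDiff.contDiffAt.comp x (hl.fderiv_right hmn)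

theorem differentiableAt_gradient {l : F → ℝ} {x : F} (hl : ContDiffAt ℝ 2 l x) :
    DifferentiableAt ℝ (∇ l) x :=
  (contDiffAt_gradient (m := 1) hl le_rfl).differentiableAt one_ne_zero

theorem inner_fderiv_gradient_apply {l : F → ℝ} {x : F} (hl : ContDiffAt ℝ 2 l x) (v w : F) :
    ⟪fderiv ℝ (∇ l) x v, w⟫ = fderiv ℝ (fderiv ℝ l) x v w := by
  have h_inner := (differentiableAt_gradient hl).hasFDerivAt.inner ℝ (hasFDerivAt_const w x)
  simp only [inner_gradient_left] at h_inner
  have h_apply := (differentiableAt_fderiv hl).hasFDerivAt.clm_apply (hasFDerivAt_const w x)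
  simpa [fderivInnerCLM_apply] using congr($(h_inner.unique h_apply) v)

theorem isSelfAdjoint_fderiv_gradient {l : F → ℝ} {x : F} (hl : ContDiffAt ℝ 2 l x) :
    IsSelfAdjoint (fderiv ℝ (∇ l) x) := by
  have hsymm : IsSymmSndFDerivAt ℝ l x := hl.isSymmSndFDerivAt (by simp)
  refine isSelfAdjoint_iff_isSymmetric.mpr fun v w => ?_
  change ⟪fderiv ℝ (∇ l) x v, w⟫ = ⟪v, fderiv ℝ (∇ l) x w⟫
  rw [real_inner_comm _ v, inner_fderiv_gradient_apply hl, inner_fderiv_gradient_apply hl,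
    hsymm.eq]

theorem gradient_eq_smul_gradient_log {P : F → ℝ} {x : F} (hP : DifferentiableAt ℝ P x)
    (hx : P x ≠ 0) : ∇ P x = P x • ∇ (fun z => Real.log (P z)) x := by
  refine ext_inner_right ℝ fun v => ?_
  rw [real_inner_smul_left, inner_gradient_left, inner_gradient_left, fderiv.log hP hx]
  simp [hx]

theorem gradient_eq_toDual_symm_fderiv_uncurry {L : ℝ → F → ℝ} {t : ℝ} {x : F}
    (hL : DifferentiableAt ℝ (Function.uncurry L) (t, x)) :
    ∇ (L t) x = (toDual ℝ F).symm (fderiv ℝ (Function.uncurry L) (t, x) ∘L inr ℝ ℝ F) := by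
  have h : HasFDerivAt (L t) (fderiv ℝ (Function.uncurry L) (t, x) ∘L inr ℝ ℝ F) x :=
    hL.hasFDerivAt.comp x (hasFDerivAt_prodMk_right t x)
  exact (hasFDerivAt_iff_hasGradientAt.mp h).gradient

theorem differentiableAt_uncurry_gradient {L : ℝ → F → ℝ} {t : ℝ} {x : F}
    (hL : ContDiffAt ℝ 2 (Function.uncurry L) (t, x)) :
    DifferentiableAt ℝ (Function.uncurry fun u => ∇ (L u)) (t, x) := by
  have h_formula : (Function.uncurry fun u => ∇ (L u)) =ᶠ[𝓝 (t, x)]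
      fun q => (toDual ℝ F).symm (fderiv ℝ (Function.uncurry L) q ∘L inr ℝ ℝ F) := by
    filter_upwards [hL.eventually (by simp)] with q hq
    exact gradient_eq_toDual_symm_fderiv_uncurry (hq.differentiableAt two_ne_zero)
  exact ((toDual ℝ F).symm.differentiable.differentiableAt.comp (t, x)
    ((differentiableAt_fderiv hL).clm_comp
      (differentiableAt_const _))).congr_of_eventuallyEq h_formula

theorem hasDerivAt_gradient {L : ℝ → F → ℝ} {t : ℝ} {x : F}
    (hL : ContDiffAt ℝ 2 (Function.uncurry L) (t, x)) :
    HasDerivAt (fun u => ∇ (L u) x) (∇ (fun z => deriv (fun u => L u z) t) x) t := by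
  have h_slice : HasDerivAt (fun u => (u, x)) ((1, 0) : ℝ × F) t :=
    (hasDerivAt_id t).prodMk (hasDerivAt_const t x)
  have h_diff : DifferentiableAt ℝ (fun u => ∇ (L u) x) t :=
    DifferentiableAt.comp (f := fun u => (u, x)) t (differentiableAt_uncurry_gradient hL)
      h_slice.differentiableAt
  have h_formula (v : F) : (fun u => ⟪∇ (L u) x, v⟫)
      =ᶠ[𝓝 t] fun u => fderiv ℝ (Function.uncurry L) (u, x) (0, v) := by
    filter_upwards [h_slice.continuousAt.eventually (hL.eventually (by simp))] with u hu
    simp [gradient_eq_toDual_symm_fderiv_uncurry (hu.differentiableAt two_ne_zero)]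
  have h_mixed (v : F) : ⟪deriv (fun u => ∇ (L u) x) t, v⟫
      = fderiv ℝ (fderiv ℝ (Function.uncurry L)) (t, x) (1, 0) (0, v) := by
    have h_fderiv := HasFDerivAt.comp_hasDerivAt (f := fun u => (u, x)) t
      (differentiableAt_fderiv hL).hasFDerivAt h_slice
    have h_apply := h_fderiv.clm_apply (hasDerivAt_const t ((0, v) : ℝ × F))
    simpa using (h_diff.hasDerivAt.inner ℝ (hasDerivAt_const t v)).unique
      (h_apply.congr_of_eventuallyEq (h_formula v))
  have hsymm : IsSymmSndFDerivAt ℝ (Function.uncurry L) (t, x) := hL.isSymmSndFDerivAt (by simp)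
  have h_eq : ∇ (fun z => deriv (fun u => L u z) t) x = deriv (fun u => ∇ (L u) x) t := by
    refine ext_inner_right ℝ fun v => ?_
    rw [inner_gradient_left, fderiv_deriv_apply hL, h_mixed, hsymm.eq]
  exact h_eq ▸ h_diff.hasDerivAt

theorem hasDerivAt_gradient_along_curve {L : ℝ → F → ℝ} {y : ℝ → F} {y' : F} {s : ℝ}
    (hL : ContDiffAt ℝ 2 (Function.uncurry L) (s, y s)) (hy : HasDerivAt y y' s) :
    HasDerivAt (fun t => ∇ (L t) (y t))
      (∇ (fun z => deriv (fun t => L t z) s) (y s) + fderiv ℝ (∇ (L s)) (y s) y') s :=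
  hasDerivAt_along_curve (differentiableAt_uncurry_gradient hL) (hasDerivAt_gradient hL) hy

end Gradient

section Divergence

open scoped Gradient Topology

variable {D : ℕ} {P : EuclideanSpace ℝ (Fin D) → ℝ}
  {V W : EuclideanSpace ℝ (Fin D) → EuclideanSpace ℝ (Fin D)} {x : EuclideanSpace ℝ (Fin D)}

theorem divg_congr (h : V =ᶠ[𝓝 x] W) : divg V x = divg W x := by
  simp only [divg, h.fderiv_eq]

theorem divg_sub (hV : DifferentiableAt ℝ V x) (hW : DifferentiableAt ℝ W x) :
    divg (fun z => V z - W z) x = divg V x - divg W x := by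
  simp [divg, fderiv_fun_sub hV hW]

theorem divg_const_smul (c : ℝ) : divg (fun z => c • V z) x = c * divg V x := by
  change divg (c • V) x = _
  simp [divg, fderiv_const_smul_field, Finset.mul_sum]

theorem divg_const_smul_id (c : ℝ) :
    divg (fun z : EuclideanSpace ℝ (Fin D) => c • z) = fun _ => c * D := by
  funext x
  simp [divg, fderiv_fun_const_smul differentiableAt_fun_id, mul_comm]

theorem divg_smul (hP : DifferentiableAt ℝ P x) (hV : DifferentiableAt ℝ V x) :
    divg (fun z => P z • V z) x = P x * divg V x + ⟪∇ P x, V x⟫ := by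
  have h_basis : V x = ∑ i, V x i • EuclideanSpace.single i (1 : ℝ) := by
    simpa using ((EuclideanSpace.basisFun (Fin D) ℝ).sum_repr (V x)).symm
  have h_inner : ⟪∇ P x, V x⟫ = ∑ i, V x i * fderiv ℝ P x (EuclideanSpace.single i 1) := by
    conv_lhs => rw [inner_gradient_left, h_basis]
    simp
  simp [divg, fderiv_fun_smul hP hV, h_inner, Finset.mul_sum, Finset.sum_add_distrib, mul_comm]

theorem differentiableAt_divg (hV : ContDiffAt ℝ 2 V x) : DifferentiableAt ℝ (divg V) x := by
  have hV' : DifferentiableAt ℝ (fderiv ℝ V) x := differentiableAt_fderiv hV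
  unfold divg
  fun_prop

theorem divg_smul_eq_mul_log (hP : DifferentiableAt ℝ P x) (hx : P x ≠ 0)
    (hV : DifferentiableAt ℝ V x) :
    divg (fun z => P z • V z) x
      = P x * (divg V x + ⟪∇ (fun z => Real.log (P z)) x, V x⟫) := by
  rw [divg_smul hP hV, gradient_eq_smul_gradient_log hP hx, real_inner_smul_left, mul_add]

theorem lap_eq_divg_smul_gradient_log (hP : ContDiffAt ℝ 1 P x) (hx : P x ≠ 0) :
    lap P x = divg (fun z => P z • ∇ (fun w => Real.log (P w)) z) x := by
  refine divg_congr ?_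
  filter_upwards [hP.eventually (by simp), hP.continuousAt.eventually_ne hx] with z hz hz0
  exact gradient_eq_smul_gradient_log (hz.differentiableAt one_ne_zero) hz0

theorem neg_divg_smul_add_mul_lap (hP : ContDiffAt ℝ 2 P x) (hx : P x ≠ 0)
    (hV : DifferentiableAt ℝ V x) (c : ℝ) :
    -divg (fun z => P z • V z) x + c * lap P x
      = -divg (fun z => P z • (V z - c • ∇ (fun w => Real.log (P w)) z)) x := by
  have hP1 : DifferentiableAt ℝ P x := hP.differentiableAt two_ne_zero
  have h_score : DifferentiableAt ℝ (∇ fun w => Real.log (P w)) x :=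
    differentiableAt_gradient (hP.log hx)
  simp only [smul_sub, smul_comm _ c]
  rw [divg_sub (hP1.fun_smul hV) ((hP1.fun_smul h_score).fun_const_smul c), divg_const_smul,
    lap_eq_divg_smul_gradient_log (hP.of_le one_le_two) hx]
  ring

theorem gradient_divg_sub_smul_gradient {l : EuclideanSpace ℝ (Fin D) → ℝ}
    (hV : ContDiffAt ℝ 2 V x) (hl : ContDiffAt ℝ 3 l x) (c : ℝ) :
    ∇ (divg fun z => V z - c • ∇ l z) x = ∇ (divg V) x - c • ∇ (lap l) x := by
  have h_score : ContDiffAt ℝ 2 (∇ l) x := contDiffAt_gradient hl (by norm_num)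
  have h_divg : (divg fun z => V z - c • ∇ l z) =ᶠ[𝓝 x] fun z => divg V z - c * lap l z := by
    filter_upwards [hV.eventually (by simp), h_score.eventually (by simp)] with z hVz hlz
    rw [divg_sub (hVz.differentiableAt two_ne_zero)
      ((hlz.differentiableAt two_ne_zero).fun_const_smul c), divg_const_smul, lap]
  have h_lap : DifferentiableAt ℝ (lap l) x := differentiableAt_divg h_score
  rw [h_divg.gradient_eq, gradient_sub (differentiableAt_divg hV) (h_lap.const_mul c),
    gradient_const_mul h_lap]

end Divergence

section ScoreDynamics

open ContinuousLinearMap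
open scoped Gradient Topology

variable {D : ℕ} {p : ℝ → EuclideanSpace ℝ (Fin D) → ℝ}
  {b v : EuclideanSpace ℝ (Fin D) → EuclideanSpace ℝ (Fin D)}
  {y : ℝ → EuclideanSpace ℝ (Fin D)} {y' x : EuclideanSpace ℝ (Fin D)} {s : ℝ}

theorem deriv_log_of_continuity_equation
    (hp : DifferentiableAt ℝ (Function.uncurry p) (s, x)) (hp0 : p s x ≠ 0)
    (hv : DifferentiableAt ℝ v x)
    (hcont : deriv (fun t => p t x) s = -divg (fun z => p s z • v z) x) :
    deriv (fun t => Real.log (p t x)) s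
      = -divg v x - ⟪∇ (fun z => Real.log (p s z)) x, v x⟫ := by
  have h_time : DifferentiableAt ℝ (fun t => p t x) s :=
    DifferentiableAt.comp (f := fun t => (t, x)) s hp (by fun_prop)
  have h_space : DifferentiableAt ℝ (p s) x :=
    DifferentiableAt.comp (f := fun z => (s, z)) x hp (by fun_prop)
  rw [deriv.log h_time hp0, hcont, divg_smul_eq_mul_log h_space hp0 hv]
  field_simp
  ring

theorem hasDerivAt_gradient_log_of_continuity_equation
    (hp : ContDiffAt ℝ 2 (Function.uncurry p) (s, y s)) (hp0 : p s (y s) ≠ 0)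
    (hv : ContDiffAt ℝ 2 v (y s))
    (hcont : ∀ᶠ x in 𝓝 (y s), deriv (fun t => p t x) s = -divg (fun z => p s z • v z) x)
    (hy : HasDerivAt y y' s) :
    HasDerivAt (fun t => ∇ (fun z => Real.log (p t z)) (y t))
      (-∇ (divg v) (y s) - adjoint (fderiv ℝ v (y s)) (∇ (fun z => Real.log (p s z)) (y s))
        + fderiv ℝ (∇ fun z => Real.log (p s z)) (y s) (y' - v (y s))) s := by
  have h_slice : ContinuousAt (fun z => (s, z)) (y s) := by fun_prop
  have h_log : ContDiffAt ℝ 2 (Function.uncurry fun t z => Real.log (p t z)) (s, y s) :=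
    hp.log hp0
  have h_log_s : ContDiffAt ℝ 2 (fun z => Real.log (p s z)) (y s) :=
    h_log.comp (y s) (contDiffAt_const.prodMk contDiffAt_id)
  have h_time : (fun z => deriv (fun t => Real.log (p t z)) s)
      =ᶠ[𝓝 (y s)] fun z => -divg v z - ⟪∇ (fun w => Real.log (p s w)) z, v z⟫ := by
    filter_upwards [hcont, hv.eventually (by simp),
      h_slice.eventually (hp.eventually (by simp)),
      h_slice.eventually (hp.continuousAt.eventually_ne hp0)] with z hz hvz hpz hpz0
    exact deriv_log_of_continuity_equation (hpz.differentiableAt two_ne_zero) hpz0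
      (hvz.differentiableAt two_ne_zero) hz
  have h_inner := hasGradientAt_inner (differentiableAt_gradient h_log_s).hasFDerivAt
    (hv.differentiableAt two_ne_zero).hasFDerivAt
  refine (hasDerivAt_gradient_along_curve h_log hy).congr_deriv ?_
  rw [h_time.gradient_eq, gradient_sub (differentiableAt_divg hv).fun_neg
    h_inner.differentiableAt, gradient_neg, h_inner.gradient,
    (isSelfAdjoint_fderiv_gradient h_log_s).adjoint_eq, map_sub]
  abel

theorem score_dynamics_along_curve_general {gsq : ℝ}
    (hp : ContDiffAt ℝ 2 (Function.uncurry p) (s, y s)) (hps : ContDiffAt ℝ 3 (p s) (y s))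
    (hppos : 0 < p s (y s)) (hb : ContDiffAt ℝ 2 b (y s))
    (hFP : ∀ᶠ x in 𝓝 (y s), deriv (fun t => p t x) s
      = -divg (fun z => p s z • b z) x + 1 / 2 * gsq * lap (p s) x)
    (hy : HasDerivAt y y' s) :
    HasDerivAt (fun t => ∇ (fun z => Real.log (p t z)) (y t))
      ((1 / 2 * gsq) • ∇ (lap fun z => Real.log (p s z)) (y s) - ∇ (divg b) (y s)
        - adjoint (fderiv ℝ b (y s)) (∇ (fun z => Real.log (p s z)) (y s))
        + fderiv ℝ (∇ fun z => Real.log (p s z)) (y s)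
            (y' - b (y s) + gsq • ∇ (fun z => Real.log (p s z)) (y s))) s := by
  set l : EuclideanSpace ℝ (Fin D) → ℝ := fun z => Real.log (p s z) with hl_def
  have hl : ContDiffAt ℝ 3 l (y s) := hps.log hppos.ne'
  have h_score : ContDiffAt ℝ 2 (∇ l) (y s) := contDiffAt_gradient hl (by norm_num)
  have h_score_diff : DifferentiableAt ℝ (∇ l) (y s) := h_score.differentiableAt two_ne_zero
  have h_cont : ∀ᶠ x in 𝓝 (y s), deriv (fun t => p t x) s
      = -divg (fun z => p s z • (b z - (1 / 2 * gsq) • ∇ l z)) x := by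
    filter_upwards [hFP, hb.eventually (by simp), hps.eventually (by simp),
      hps.continuousAt.eventually_ne hppos.ne'] with x hx hbx hpx hpx0
    rw [hx, neg_divg_smul_add_mul_lap (hpx.of_le (by norm_num)) hpx0
      (hbx.differentiableAt two_ne_zero)]
  have h_fderiv : fderiv ℝ (fun z => b z - (1 / 2 * gsq) • ∇ l z) (y s)
      = fderiv ℝ b (y s) - (1 / 2 * gsq) • fderiv ℝ (∇ l) (y s) := by
    rw [fderiv_fun_sub (hb.differentiableAt two_ne_zero) (h_score_diff.fun_const_smul _),
      fderiv_fun_const_smul h_score_diff]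
  have hv : ContDiffAt ℝ 2 (fun z => b z - (1 / 2 * gsq) • ∇ l z) (y s) :=
    hb.sub (h_score.const_smul _)
  refine (hasDerivAt_gradient_log_of_continuity_equation hp hppos.ne' hv h_cont hy).congr_deriv ?_
  rw [gradient_divg_sub_smul_gradient hb hl, h_fderiv, map_sub, map_smulₛₗ,
    (isSelfAdjoint_fderiv_gradient (hl.of_le (by norm_num))).adjoint_eq]
  simp only [map_add, map_sub, map_smul, sub_apply, smul_apply, conj_trivial, ← hl_def]
  module

end ScoreDynamics

/-- Score dynamics along an arbitrary differentiable curve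
(eq. score_dynamics in the proof of the mode-tracking theorem). -/
theorem score_dynamics_along_curve {D : ℕ} (hD : 0 < D)
    (α σ : ℝ → ℝ) (hα : ContDiff ℝ (⊤ : ℕ∞) α) (hσ : ContDiff ℝ (⊤ : ℕ∞) σ)
    (hαpos : ∀ t, 0 < α t) (hσpos : ∀ t, 0 < σ t)
    (lam f gsq : ℝ → ℝ)
    (hlam : ∀ t, lam t = Real.log (α t ^ 2 / σ t ^ 2))
    (hf : ∀ t, f t = deriv (fun u => Real.log (α u)) t)
    (hgsq : ∀ t, gsq t = -(deriv lam t) * σ t ^ 2)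
    (p : ℝ → EuclideanSpace ℝ (Fin D) → ℝ)
    (hp : ContDiff ℝ (⊤ : ℕ∞) (fun q : ℝ × EuclideanSpace ℝ (Fin D) => p q.1 q.2))
    (hppos : ∀ t x, 0 < p t x)
    (hFP : ∀ t x, deriv (fun τ => p τ x) t
      = - divg (fun y => p t y • (f t • y)) x + (1 / 2) * gsq t * lap (p t) x)
    (y y' : ℝ → EuclideanSpace ℝ (Fin D))
    (hy : ∀ s, HasDerivAt y (y' s) s) :
    ∀ s, HasDerivAt (fun u => gradient (fun z => Real.log (p u z)) (y u))
      (((1 / 2) * gsq s) • gradient (fun z => lap (fun w => Real.log (p s w)) z) (y s)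
        - f s • gradient (fun z => Real.log (p s z)) (y s)
        + (fderiv ℝ (fun z => gradient (fun w => Real.log (p s w)) z) (y s))
            (y' s - f s • y s + gsq s • gradient (fun z => Real.log (p s z)) (y s))) s := by
  intro s
  have hps : ContDiff ℝ (⊤ : ℕ∞) (p s) := hp.comp (contDiff_prodMk_right s)
  simpa [divg_const_smul_id, fderiv_fun_const_smul differentiableAt_fun_id,
    ContinuousLinearMap.adjoint_id] using
    score_dynamics_along_curve_general (b := fun x => f s • x)
      (hp.contDiffAt.of_le (by norm_cast)) (hps.contDiffAt.of_le (by norm_cast))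
      (hppos s (y s)) (by fun_prop) (.of_forall (hFP s)) (hy s)
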